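/- Let β_{0,i}, β_{∞,i} > 0 (i = 1,…,n) and let p₀, p∞ satisfy p₀ ≥ max_{1≤j≤n} (r_{0,j}/r_{∞,j})(2r_{∞,j}+d∞), p∞ ≥ 2 max_{1≤j≤n} r_{∞,j} + d∞, and p₀/r_{0,j} < p∞/r_{∞,j} for all j. For i = 1,…,n−1 define Z_i(z_i, z_{i+1}) := Σ_{j∈{0,∞}} β_{j,i} [ (r_{j,i}/p_j)|z_i|^{p_j/r_{j,i}} − z_i·⌈ξ_i⌋^{(p_j−r_{j,i})/r_{j,i}} + ((p_j−r_{j,i})/p_j)|ξ_i|^{p_j/r_{j,i}} ] with ξ_i := varphi_i⁻¹(z_{i+1}), and Z_n(z_n) := β_{0,n}|z_n|^{p₀}/p₀ + β_{∞,n}|z_n|^{p∞}/p∞. Then the function V(z) := Σ_{i=1}^{n−1} Z_i(z_i, z_{i+1}) + Z_n(z_n) on ℝⁿ is continuous, nonnegative, satisfies V(z) = 0 if and only if z = 0, and is radially unbounded: V(z) → ∞ as ‖z‖ → ∞. -/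

import Mathlib

/-!
With `q = p_j / r_{j,i} > 1`, each bracket in `Z_i` is the defect
`|z|^q/q - z⌈ξ⌋^(q-1) + (1 - 1/q)|ξ|^q` in Young's inequality (`young`). Bernoulli's inequality
shows that it is positive unless `z = ξ`, where it vanishes (`young_pos`, `young_self`). That `q > 1`
comes from `2 r_{∞,j} + d∞ = r_{∞,j} + r_{∞,j+1} > r_{∞,j}`.

Hence `V ≥ 0`, and every summand of `V` is at most `V`. If `V z = 0`, then `z_n = 0` by the last
summand, and downward induction gives `z_i = varphi_i⁻¹(z_{i+1}) = varphi_i⁻¹(0) = 0`. Radial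
unboundedness is a quantitative form of the same induction: when `V z ≤ c`, the last summand bounds
`z_n`; if `z_{i+1}` is bounded, so is `ξ_i = varphi_i⁻¹(z_{i+1})`, and since the Young defect
dominates `|z_i|^q/q - |z_i||ξ_i|^(q-1)`, so is `z_i` (`young_coercive`). Sublevel sets of `V` are
therefore bounded.

Continuity needs only that `varphi_i⁻¹` is continuous, which holds since it is an order isomorphism
of `ℝ`.
-/

open Real Filter Topology Set

/-- Signed power: `⌈s⌋^p = sign(s)·|s|^p` (so `⌈s⌋^0 = sign s`). -/
noncomputable def spow (s p : ℝ) : ℝ := Real.sign s * |s| ^ p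

/-- `zp n z i` is the `i`-th coordinate (1-based, as in the paper) of `z ∈ ℝⁿ`. -/
def zp (n : ℕ) (z : Fin n → ℝ) (i : ℕ) : ℝ := if h : i - 1 < n then z ⟨i - 1, h⟩ else 0

lemma spow_of_nonneg {s p : ℝ} (hp : 0 < p) (hs : 0 ≤ s) : spow s p = s ^ p := by
  rcases hs.eq_or_lt with rfl | h
  · simp [spow, Real.zero_rpow hp.ne']
  · simp [spow, Real.sign_of_pos h, abs_of_pos h]

lemma spow_neg (s p : ℝ) : spow (-s) p = -spow s p := by
  simp [spow, Real.sign_neg]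

/-- The signed power as a difference of powers of the positive and negative parts of `s`. -/
lemma spow_eq {p : ℝ} (hp : 0 < p) (s : ℝ) : spow s p = (max s 0) ^ p - (max (-s) 0) ^ p := by
  rcases le_total 0 s with h | h
  · rw [spow_of_nonneg hp h, max_eq_left h, max_eq_right (by linarith), Real.zero_rpow hp.ne',
      sub_zero]
  · rw [← neg_neg s, spow_neg, spow_of_nonneg hp (by linarith : 0 ≤ -s), neg_neg, max_eq_right h,
      max_eq_left (by linarith : 0 ≤ -s), Real.zero_rpow hp.ne', zero_sub]

lemma continuous_spow {p : ℝ} (hp : 0 < p) : Continuous fun s => spow s p := by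
  simp_rw [spow_eq hp]
  exact ((continuous_id.max continuous_const).rpow_const fun _ => Or.inr hp.le).sub
    ((continuous_neg.max continuous_const).rpow_const fun _ => Or.inr hp.le)

lemma strictMono_spow {p : ℝ} (hp : 0 < p) : StrictMono fun s => spow s p := by
  intro a b hab
  simp only [spow_eq hp]
  have h1 : (max a 0) ^ p ≤ (max b 0) ^ p :=
    Real.rpow_le_rpow (le_max_right _ _) (max_le_max_right _ hab.le) hp.le
  have h2 : (max (-b) 0) ^ p ≤ (max (-a) 0) ^ p :=
    Real.rpow_le_rpow (le_max_right _ _) (max_le_max_right _ (by linarith)) hp.le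
  rcases lt_or_ge 0 b with hb | hb
  · have : (max a 0) ^ p < (max b 0) ^ p :=
      Real.rpow_lt_rpow (le_max_right _ _) (by rw [max_eq_left hb.le]; exact max_lt hab hb) hp
    linarith
  · have : (max (-b) 0) ^ p < (max (-a) 0) ^ p :=
      Real.rpow_lt_rpow (le_max_right _ _) (by
        rw [max_eq_left (by linarith : 0 ≤ -b)]
        exact lt_of_lt_of_le (by linarith) (le_max_left _ _)) hp
    linarith

lemma abs_spow_le (s p : ℝ) : |spow s p| ≤ |s| ^ p := by
  have h0 : 0 ≤ |s| ^ p := Real.rpow_nonneg (abs_nonneg s) p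
  have h1 : |Real.sign s| ≤ 1 := by
    rcases Real.sign_apply_eq s with h | h | h <;> simp [h]
  rw [spow, abs_mul, abs_of_nonneg h0]
  exact mul_le_of_le_one_left h0 h1

/-- The defect in Young's inequality with exponent `q` for `z` and `⌈x⌋^(q-1)`. -/
noncomputable def young (q z x : ℝ) : ℝ :=
  (1 / q) * |z| ^ q - z * spow x (q - 1) + (1 - 1 / q) * |x| ^ q

lemma young_neg (q z x : ℝ) : young q (-z) (-x) = young q z x := by
  simp [young, spow_neg]

lemma continuous_young {q : ℝ} (hq : 1 < q) : Continuous fun y : ℝ × ℝ => young q y.1 y.2 := by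
  have h0 : 0 ≤ q := by linarith
  exact ((continuous_const.mul (continuous_fst.abs.rpow_const fun _ => Or.inr h0)).sub
    (continuous_fst.mul ((continuous_spow (by linarith : 0 < q - 1)).comp continuous_snd))).add
    (continuous_const.mul (continuous_snd.abs.rpow_const fun _ => Or.inr h0))

lemma young_self {q : ℝ} (hq : 1 < q) (z : ℝ) : young q z z = 0 := by
  wlog hz : 0 ≤ z generalizing z
  · rw [← young_neg]
    exact this (-z) (by linarith)
  rw [young, abs_of_nonneg hz, spow_of_nonneg (by linarith) hz]
  have : z * z ^ (q - 1) = z ^ q := by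
    rw [← Real.rpow_one_add' hz (by linarith)]; congr 1; ring
  rw [this]; ring

/-- Strict Young inequality. -/
lemma young_pos {q : ℝ} (hq : 1 < q) {z x : ℝ} (h : z ≠ x) : 0 < young q z x := by
  have hq0 : 0 < q := by linarith
  have hq1 : 0 < 1 - 1 / q := by
    rw [sub_pos, div_lt_one hq0]; exact hq
  wlog hx : 0 ≤ x generalizing z x
  · rw [← young_neg]
    exact this (fun e => h (neg_injective e)) (by linarith)
  rw [young, spow_of_nonneg (by linarith) hx, abs_of_nonneg hx]
  rcases hx.eq_or_lt with rfl | hx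
  · have := Real.rpow_pos_of_pos (abs_pos.2 h) q
    rw [Real.zero_rpow hq0.ne', Real.zero_rpow (by linarith)]
    simp only [mul_zero, sub_zero, add_zero]
    positivity
  have hxq := Real.rpow_pos_of_pos hx q
  have hxq1 := Real.rpow_pos_of_pos hx (q - 1)
  rcases lt_or_ge z 0 with hz | hz
  · have h1 : 0 ≤ (1 / q) * |z| ^ q := by positivity
    have h2 : 0 < -z * x ^ (q - 1) := mul_pos (by linarith) hxq1
    have h3 := mul_pos hq1 hxq
    linarith
  -- Bernoulli's inequality at `z / x`, multiplied by `x ^ q / q`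
  have hB := one_add_mul_self_lt_rpow_one_add (s := z / x - 1) (by
    have := div_nonneg hz hx.le
    linarith) (fun e => h (by
      have : z / x = 1 := by linarith
      exact (div_eq_one_iff_eq hx.ne').1 this)) hq
  rw [add_sub_cancel, Real.div_rpow hz hx.le, lt_div_iff₀ hxq] at hB
  have hx1 : x ^ q = x * x ^ (q - 1) := by
    rw [← Real.rpow_one_add' hx.le (by linarith)]; congr 1; ring
  rw [abs_of_nonneg hz]
  have e : (1 / q) * z ^ q - z * x ^ (q - 1) + (1 - 1 / q) * x ^ q
      = (1 / q) * (z ^ q - (1 + q * (z / x - 1)) * x ^ q) := by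
    rw [hx1]; field_simp; ring
  rw [e]
  exact mul_pos (by positivity) (by linarith)

lemma young_nonneg {q : ℝ} (hq : 1 < q) (z x : ℝ) : 0 ≤ young q z x := by
  by_cases h : z = x
  · rw [h, young_self hq]
  · exact (young_pos hq h).le

/-- The Young defect is coercive in `z`, uniformly for bounded `x`. -/
lemma young_coercive {q : ℝ} (hq : 1 < q) (M c : ℝ) :
    ∃ B, ∀ z x, |x| ≤ M → young q z x ≤ c → |z| ≤ B := by
  have hq0 : 0 < q := by linarith
  have ht : Tendsto (fun a : ℝ => a * ((1 / q) * a ^ (q - 1) - M ^ (q - 1))) atTop atTop :=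
    tendsto_id.atTop_mul_atTop₀ (tendsto_atTop_add_const_right _ _
      ((tendsto_rpow_atTop (by linarith : 0 < q - 1)).const_mul_atTop (by positivity)))
  obtain ⟨B, hB⟩ := eventually_atTop.1 (ht.eventually_gt_atTop c)
  refine ⟨B, fun z x hx hy => ?_⟩
  by_contra! hz
  have h1 := hB |z| hz.le
  have hz1 : |z| ^ q = |z| * |z| ^ (q - 1) := by
    rw [← Real.rpow_one_add' (abs_nonneg z) (by linarith)]; congr 1; ring
  have h2 : z * spow x (q - 1) ≤ |z| * M ^ (q - 1) := calc
    z * spow x (q - 1) ≤ |z| * |spow x (q - 1)| := by rw [← abs_mul]; exact le_abs_self _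
    _ ≤ |z| * M ^ (q - 1) := mul_le_mul_of_nonneg_left
      ((abs_spow_le _ _).trans (Real.rpow_le_rpow (abs_nonneg x) hx (by linarith))) (abs_nonneg z)
  have h3 : 0 ≤ (1 - 1 / q) * |x| ^ q := by
    refine mul_nonneg ?_ (by positivity)
    rw [sub_nonneg, div_le_one hq0]; exact hq.le
  rw [young, hz1] at hy
  nlinarith

lemma continuous_zp (n i : ℕ) : Continuous fun z => zp n z i := by
  unfold zp
  split_ifs
  · exact continuous_apply _
  · exact continuous_const

lemma zp_succ (n : ℕ) (z : Fin n → ℝ) (j : Fin n) : zp n z (j + 1) = z j := by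
  simp [zp]

/-- `r_i = 1 - (n-i)d` is positive for `1 ≤ i ≤ n+1`. -/
lemma weight_pos {n j : ℕ} {d : ℝ} (hn : 2 ≤ n) (h1 : -1 < d) (h2 : d < 1 / ((n : ℝ) - 1))
    (hj : 1 ≤ j) (hj' : j ≤ n + 1) : 0 < 1 - ((n : ℝ) - j) * d := by
  have hn' : (2 : ℝ) ≤ n := by exact_mod_cast hn
  have hj1 : (1 : ℝ) ≤ j := by exact_mod_cast hj
  rw [lt_div_iff₀ (by linarith)] at h2
  rcases hj'.eq_or_lt with rfl | hlt
  · push_cast; linarith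
  have hj2 : (j : ℝ) ≤ n := by exact_mod_cast (by omega : j ≤ n)
  rcases le_total 0 d with h | h
  · nlinarith
  · nlinarith

/-- In the bl-homogeneous differentiator setting, with
`β_{0,i}, β_{∞,i} > 0` and `p₀, p∞` satisfying (8)–(9), the candidate Lyapunov
function `V(z) = Σ_{i=1}^{n−1} Z_i(z_i, z_{i+1}) + Z_n(z_n)` of (13) is
continuous, nonnegative, vanishes exactly at `z = 0`, and is radially
unbounded (`V(z) → ∞` as `‖z‖ → ∞`). -/
theorem stmt9 (n : ℕ) (hn : 2 ≤ n) (d0 dinf : ℝ)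
    (hd0 : -1 < d0) (hdd : d0 ≤ dinf) (hdinf : dinf < 1 / ((n : ℝ) - 1))
    (r0 rinf : ℕ → ℝ)
    (hr0 : ∀ j, r0 j = 1 - ((n : ℝ) - j) * d0)
    (hrinf : ∀ j, rinf j = 1 - ((n : ℝ) - j) * dinf)
    (κ θ : ℕ → ℝ)
    (hκ : ∀ j ∈ Finset.Icc 1 n, 0 < κ j) (hθ : ∀ j ∈ Finset.Icc 1 n, 0 < θ j)
    (varphi : ℕ → ℝ → ℝ)
    (hvarphi : ∀ j ∈ Finset.Icc 1 n, ∀ s,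
      varphi j s = κ j * spow s (r0 (j + 1) / r0 j) + θ j * spow s (rinf (j + 1) / rinf j))
    (β0 βinf : ℕ → ℝ)
    (hβ0 : ∀ j ∈ Finset.Icc 1 n, 0 < β0 j) (hβinf : ∀ j ∈ Finset.Icc 1 n, 0 < βinf j)
    (p0 pinf : ℝ)
    (hp0 : ∀ j ∈ Finset.Icc 1 n, (r0 j / rinf j) * (2 * rinf j + dinf) ≤ p0)
    (hpinf : ∀ j ∈ Finset.Icc 1 n, 2 * rinf j + dinf ≤ pinf)
    (hp0pinf : ∀ j ∈ Finset.Icc 1 n, p0 / r0 j < pinf / rinf j)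
    (ψ : ℕ → ℝ → ℝ)
    (hψl : ∀ i ∈ Finset.Icc 1 (n - 1), Function.LeftInverse (ψ i) (varphi i))
    (hψr : ∀ i ∈ Finset.Icc 1 (n - 1), Function.RightInverse (ψ i) (varphi i))
    (Z : ℕ → ℝ → ℝ → ℝ)
    (hZ : ∀ i ∈ Finset.Icc 1 (n - 1), ∀ z w, Z i z w =
      β0 i * ((r0 i / p0) * |z| ^ (p0 / r0 i) - z * spow (ψ i w) ((p0 - r0 i) / r0 i)
        + ((p0 - r0 i) / p0) * |ψ i w| ^ (p0 / r0 i))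
      + βinf i * ((rinf i / pinf) * |z| ^ (pinf / rinf i)
        - z * spow (ψ i w) ((pinf - rinf i) / rinf i)
        + ((pinf - rinf i) / pinf) * |ψ i w| ^ (pinf / rinf i)))
    (Zn : ℝ → ℝ)
    (hZn : ∀ z, Zn z = β0 n * |z| ^ p0 / p0 + βinf n * |z| ^ pinf / pinf)
    (V : (Fin n → ℝ) → ℝ)
    (hV : ∀ z : Fin n → ℝ,
      V z = (∑ i ∈ Finset.Icc 1 (n - 1), Z i (zp n z i) (zp n z (i + 1))) + Zn (zp n z n)) :
    Continuous V ∧ (∀ z, 0 ≤ V z) ∧ (∀ z, V z = 0 ↔ z = 0) ∧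
    Tendsto V (cocompact (Fin n → ℝ)) atTop := by
  have hn1 : n ∈ Finset.Icc 1 n := Finset.mem_Icc.2 ⟨by omega, le_rfl⟩
  have hsub : ∀ {i}, i ∈ Finset.Icc 1 (n - 1) → i ∈ Finset.Icc 1 n := fun {i} hi => by
    rw [Finset.mem_Icc] at hi ⊢; omega
  have r0pos : ∀ j, 1 ≤ j → j ≤ n + 1 → 0 < r0 j := fun j h1 h2 => by
    rw [hr0]; exact weight_pos hn hd0 (hdd.trans_lt hdinf) h1 h2
  have ripos : ∀ j, 1 ≤ j → j ≤ n + 1 → 0 < rinf j := fun j h1 h2 => by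
    rw [hrinf]; exact weight_pos hn (hd0.trans_le hdd) hdinf h1 h2
  have hstep : ∀ j ∈ Finset.Icc 1 n, rinf j < 2 * rinf j + dinf := fun j hj => by
    rw [Finset.mem_Icc] at hj
    have h := ripos (j + 1) (by omega) (by omega)
    have e : rinf (j + 1) = rinf j + dinf := by rw [hrinf, hrinf]; push_cast; ring
    linarith
  have q0 : ∀ j ∈ Finset.Icc 1 n, 1 < p0 / r0 j := fun j hj => by
    have hj' := Finset.mem_Icc.1 hj
    have h0 := r0pos j (by omega) (by omega)
    have hi := ripos j (by omega) (by omega)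
    rw [one_lt_div h0]
    refine lt_of_lt_of_le ?_ (hp0 j hj)
    have := mul_lt_mul_of_pos_left (hstep j hj) (div_pos h0 hi)
    rwa [div_mul_cancel₀ _ hi.ne'] at this
  have qi : ∀ j ∈ Finset.Icc 1 n, 1 < pinf / rinf j := fun j hj => by
    have hj' := Finset.mem_Icc.1 hj
    rw [one_lt_div (ripos j (by omega) (by omega))]
    exact (hstep j hj).trans_le (hpinf j hj)
  have r0n : r0 n = 1 := by rw [hr0]; ring
  have rin : rinf n = 1 := by rw [hrinf]; ring
  have p0gt : 1 < p0 := by simpa [r0n] using q0 n hn1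
  have pigt : 1 < pinf := by simpa [rin] using qi n hn1
  have hZ' : ∀ i ∈ Finset.Icc 1 (n - 1), ∀ z w, Z i z w =
      β0 i * young (p0 / r0 i) z (ψ i w) + βinf i * young (pinf / rinf i) z (ψ i w) := by
    intro i hi z w
    have hi' := Finset.mem_Icc.1 hi
    have h0 := r0pos i (by omega) (by omega)
    have h1 := ripos i (by omega) (by omega)
    have e : ∀ {p r : ℝ}, 1 < p → 0 < r →
        (p - r) / r = p / r - 1 ∧ r / p = 1 / (p / r) ∧ (p - r) / p = 1 - 1 / (p / r) := by
      intro p r hp hr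
      have : p ≠ 0 := by linarith
      refine ⟨?_, ?_, ?_⟩ <;> field_simp
    obtain ⟨a1, a2, a3⟩ := e p0gt h0
    obtain ⟨b1, b2, b3⟩ := e pigt h1
    rw [hZ i hi, a1, a2, a3, b1, b2, b3, young, young]
  have hvar0 : ∀ i ∈ Finset.Icc 1 (n - 1), ψ i 0 = 0 := by
    intro i hi
    have : varphi i 0 = 0 := by rw [hvarphi i (hsub hi)]; simp [spow]
    rw [← this, hψl i hi, this]
  have hψmono : ∀ i ∈ Finset.Icc 1 (n - 1), Monotone (ψ i) ∧ Continuous (ψ i) := by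
    intro i hi
    have hi' := Finset.mem_Icc.1 hi
    have hm : StrictMono (varphi i) := by
      have a := strictMono_spow (div_pos (r0pos (i + 1) (by omega) (by omega))
        (r0pos i (by omega) (by omega)))
      have b := strictMono_spow (div_pos (ripos (i + 1) (by omega) (by omega))
        (ripos i (by omega) (by omega)))
      intro s t hst
      rw [hvarphi i (hsub hi), hvarphi i (hsub hi)]
      exact add_lt_add (mul_lt_mul_of_pos_left (a hst) (hκ i (hsub hi)))
        (mul_lt_mul_of_pos_left (b hst) (hθ i (hsub hi)))
    let e := hm.orderIsoOfRightInverse (varphi i) (ψ i) (hψr i hi)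
    exact ⟨e.symm.monotone, e.symm.continuous⟩
  have hZnonneg : ∀ i ∈ Finset.Icc 1 (n - 1), ∀ z w, 0 ≤ Z i z w := by
    intro i hi z w
    rw [hZ' i hi]
    exact add_nonneg (mul_nonneg (hβ0 i (hsub hi)).le (young_nonneg (q0 i (hsub hi)) _ _))
      (mul_nonneg (hβinf i (hsub hi)).le (young_nonneg (qi i (hsub hi)) _ _))
  have hZlow : ∀ i ∈ Finset.Icc 1 (n - 1), ∀ z w,
      β0 i * young (p0 / r0 i) z (ψ i w) ≤ Z i z w := by
    intro i hi z w
    rw [hZ' i hi]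
    exact le_add_of_nonneg_right
      (mul_nonneg (hβinf i (hsub hi)).le (young_nonneg (qi i (hsub hi)) _ _))
  have hb0n := hβ0 n hn1
  have hbin := hβinf n hn1
  have hZnlow : ∀ z, β0 n / p0 * |z| ^ p0 ≤ Zn z := by
    intro z
    rw [hZn]
    have : 0 ≤ βinf n * |z| ^ pinf / pinf := by positivity
    have e : β0 n / p0 * |z| ^ p0 = β0 n * |z| ^ p0 / p0 := by ring
    linarith
  have hZnnonneg : ∀ z, 0 ≤ Zn z := fun z => le_trans (by positivity) (hZnlow z)
  have hVnonneg : ∀ z, 0 ≤ V z := fun z => by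
    rw [hV]
    exact add_nonneg (Finset.sum_nonneg fun i hi => hZnonneg i hi _ _) (hZnnonneg _)
  have hZleV : ∀ z, ∀ i ∈ Finset.Icc 1 (n - 1), Z i (zp n z i) (zp n z (i + 1)) ≤ V z := by
    intro z i hi
    rw [hV]
    exact (Finset.single_le_sum (f := fun i => Z i (zp n z i) (zp n z (i + 1)))
      (fun i hi => hZnonneg i hi _ _) hi).trans (le_add_of_nonneg_right (hZnnonneg _))
  have hZnleV : ∀ z, Zn (zp n z n) ≤ V z := fun z => by
    rw [hV]
    exact le_add_of_nonneg_left (Finset.sum_nonneg fun i hi => hZnonneg i hi _ _)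
  refine ⟨?_, hVnonneg, fun z => ⟨fun h => ?_, fun h => ?_⟩, ?_⟩
  · rw [funext hV]
    refine Continuous.add (continuous_finsetSum _ fun i hi => ?_) ?_
    · simp_rw [hZ' i hi]
      have hc : Continuous fun z => (zp n z i, ψ i (zp n z (i + 1))) :=
        (continuous_zp n i).prodMk ((hψmono i hi).2.comp (continuous_zp n (i + 1)))
      exact (continuous_const.mul ((continuous_young (q0 i (hsub hi))).comp hc)).add
        (continuous_const.mul ((continuous_young (qi i (hsub hi))).comp hc))
    · simp_rw [hZn]
      have hc := (continuous_zp n n).abs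
      exact ((continuous_const.mul (hc.rpow_const fun _ => Or.inr (by linarith))).div_const _).add
        ((continuous_const.mul (hc.rpow_const fun _ => Or.inr (by linarith))).div_const _)
  · have key : ∀ k < n, zp n z (n - k) = 0 := by
      intro k
      induction k with
      | zero =>
        intro _
        by_contra hne
        have h1 := (hZnlow (zp n z n)).trans (hZnleV z)
        have h2 : 0 < |zp n z n| ^ p0 := Real.rpow_pos_of_pos (abs_pos.2 hne) _
        have h3 : 0 < β0 n / p0 * |zp n z n| ^ p0 := by positivity
        linarith
      | succ k ih =>
        intro hk
        have hi : n - (k + 1) ∈ Finset.Icc 1 (n - 1) := Finset.mem_Icc.2 (by omega)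
        have h0 := ih (by omega)
        by_contra hne
        have h1 := (hZlow _ hi _ _).trans (hZleV z _ hi)
        rw [show n - (k + 1) + 1 = n - k by omega, h0, hvar0 _ hi] at h1
        have h2 := mul_pos (hβ0 _ (hsub hi)) (young_pos (q0 _ (hsub hi)) hne)
        linarith
    funext j
    have := key (n - (j + 1)) (by omega)
    rwa [show n - (n - ((j : ℕ) + 1)) = j + 1 by omega, zp_succ] at this
  · have hz : ∀ i, zp n z i = 0 := fun i => by simp [zp, h]
    rw [hV, hz n, hZn, Finset.sum_eq_zero]
    · simp [Real.zero_rpow (by linarith : p0 ≠ 0), Real.zero_rpow (by linarith : pinf ≠ 0)]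
    · intro i hi
      rw [hz, hz, hZ' i hi, hvar0 i hi, young_self (q0 i (hsub hi)), young_self (qi i (hsub hi))]
      simp
  · rw [tendsto_atTop]
    intro c
    have key : ∀ k < n, ∃ B, ∀ z, V z ≤ c → |zp n z (n - k)| ≤ B := by
      intro k
      induction k with
      | zero =>
        intro _
        obtain ⟨B, hB⟩ := eventually_atTop.1
          (((tendsto_rpow_atTop (by linarith : 0 < p0)).const_mul_atTop (by positivity : 0 < β0 n / p0)).eventually_gt_atTop c)
        refine ⟨B, fun z hz => ?_⟩
        by_contra! hlt
        have h1 := hB _ hlt.le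
        have h2 := (hZnlow (zp n z n)).trans (hZnleV z)
        rw [Nat.sub_zero] at h1
        linarith
      | succ k ih =>
        intro hk
        have hi : n - (k + 1) ∈ Finset.Icc 1 (n - 1) := Finset.mem_Icc.2 (by omega)
        obtain ⟨B, hB⟩ := ih (by omega)
        have hβ := hβ0 _ (hsub hi)
        -- by monotonicity, `|ψ w| ≤ max |ψ (-B)| |ψ B|` whenever `|w| ≤ B`
        obtain ⟨B', hB'⟩ := young_coercive (q0 _ (hsub hi))
          (max |ψ (n - (k + 1)) (-B)| |ψ (n - (k + 1)) B|) (c / β0 (n - (k + 1)))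
        refine ⟨B', fun z hz => hB' _ (ψ (n - (k + 1)) (zp n z (n - k))) ?_ ?_⟩
        · have hw := abs_le.1 (hB z hz)
          have := abs_le_max_abs_abs ((hψmono _ hi).1 hw.1) ((hψmono _ hi).1 hw.2)
          exact this
        · rw [le_div_iff₀ hβ, mul_comm]
          have h1 := (hZlow _ hi _ _).trans (hZleV z _ hi)
          rw [show n - (k + 1) + 1 = n - k by omega] at h1
          exact h1.trans hz
    have key' : ∀ j : Fin n, ∃ B, ∀ z, V z ≤ c → |z j| ≤ B := by
      intro j
      have := key (n - (j + 1)) (by omega)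
      rw [show n - (n - ((j : ℕ) + 1)) = j + 1 by omega] at this
      simpa only [zp_succ] using this
    choose B hB using key'
    refine mem_cocompact.2 ⟨Set.pi univ fun j => Icc (-B j) (B j),
      isCompact_univ_pi fun j => isCompact_Icc, fun z hz => ?_⟩
    by_contra hlt
    have hlt' : V z ≤ c := (not_le.1 hlt).le
    exact hz fun j _ => abs_le.1 (hB j z hlt')
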